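/- Let s ≥ 15 and set A(x) = 1 + 7/(10Q)·x − 7/(10Q). Then: (a) the function y ↦ OPT(1, A(y), A(y), 1, y, y, s) is strictly increasing on 4/10 ≤ y ≤ 1, and its value at y = 1 is 3; (b) for every fixed y with 4/10 ≤ y ≤ 1, the function z ↦ OPT(1, A(y+z), A(y−z), 1, y+z, y−z, s) is decreasing on 0 ≤ z ≤ min{y, 1−y}. -/

import Mathlib

/-- `q(x) = exp(x) - x - 1`. -/
noncomputable def q (x : ℝ) : ℝ := Real.exp x - x - 1

/-- `Q(x) = x·(exp(x) − 1)/(exp(x) − x − 1)`. -/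
noncomputable def Qf (x : ℝ) : ℝ := x * (Real.exp x - 1) / (Real.exp x - x - 1)

/-- `OPT(x₀,x₁,x₂,y₀,y₁,y₂,s) = OPT1 · OPT2 · OPT3` with `Q = Q(s)`. -/
noncomputable def OPT (x₀ x₁ x₂ y₀ y₁ y₂ s : ℝ) : ℝ :=
  ((q (s*x₀) + q (s*x₁) + q (s*x₂)) / q s) *
  (1 / (x₀*y₀ + x₁*y₁ + x₂*y₂)) ^ (Qf s) *
  ((y₀+y₁+y₂) ^ (Qf s) +
    2 * (y₀^2 + y₁^2 + y₂^2 - y₀*y₁ - y₀*y₂ - y₁*y₂) ^ (Qf s / 2))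

/-!
The logarithmic derivative of `OPT` along a path is the sum of those of its three factors, and each
of these has an explicit bound. With `d = 1 - y`, along `y ↦ (1, A y, A y, 1, y, y)` they are at
least
`7/5 * (1/3 - 11/100 * d)`, `-2Q/(1 + 2y) - 7/5 * (1/3 - 18/100 * d)` and `2Q/(1 + 2y) - d/50`,
with a sum of at least `39/500 * d`. Along `z ↦ (1, A (y + z), A (y - z), 1, y + z, y - z)` they are
at most `4/5 * z`, `-14/15 * z` and `z/25`, with a sum of at most `-7/75 * z`.
The slope `7/(10Q)` of `A` cancels the exponent `Q` of `OPT2`, and the second summand of `OPT3` is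
negligible because `Q ≥ s ≥ 15`.
-/

open Real Set

section LogDeriv

variable {D : Set ℝ} {f : ℝ → ℝ} {c f' p x : ℝ}

lemma deriv_eq_logDeriv_mul (hf : f x ≠ 0) : deriv f x = logDeriv f x * f x :=
  (div_mul_cancel₀ _ hf).symm

lemma strictMonoOn_of_logDeriv_pos (hD : Convex ℝ D) (hf : ContinuousOn f D)
    (hpos : ∀ x ∈ interior D, 0 < f x) (hlog : ∀ x ∈ interior D, 0 < logDeriv f x) :
    StrictMonoOn f D := by
  refine strictMonoOn_of_deriv_pos hD hf fun x hx => ?_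
  rw [deriv_eq_logDeriv_mul (hpos x hx).ne']
  exact mul_pos (hlog x hx) (hpos x hx)

lemma antitoneOn_of_logDeriv_nonpos (hD : Convex ℝ D) (hf : ContinuousOn f D)
    (hdiff : DifferentiableOn ℝ f (interior D)) (hpos : ∀ x ∈ interior D, 0 < f x)
    (hlog : ∀ x ∈ interior D, logDeriv f x ≤ 0) : AntitoneOn f D := by
  refine antitoneOn_of_deriv_nonpos hD hf hdiff fun x hx => ?_
  rw [deriv_eq_logDeriv_mul (hpos x hx).ne']
  exact mul_nonpos_of_nonpos_of_nonneg (hlog x hx) (hpos x hx).le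

lemma le_logDeriv_of_hasDerivAt (hf : HasDerivAt f f' x) (hpos : 0 < f x) (hc : c * f x ≤ f') :
    c ≤ logDeriv f x := by
  rwa [logDeriv_apply, hf.deriv, le_div_iff₀ hpos]

lemma logDeriv_le_of_hasDerivAt (hf : HasDerivAt f f' x) (hpos : 0 < f x) (hc : f' ≤ c * f x) :
    logDeriv f x ≤ c := by
  rwa [logDeriv_apply, hf.deriv, div_le_iff₀ hpos]

lemma logDeriv_one_div_rpow (hf : HasDerivAt f f' x) (hpos : 0 < f x) :
    logDeriv (fun u => (1 / f u) ^ p) x = -(p * (f' / f x)) := by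
  have hinv : HasDerivAt (fun u => (1 / f u) ^ p) _ x :=
    ((hasDerivAt_const x (1 : ℝ)).fun_div hf hpos.ne').rpow_const
      (Or.inl (one_div_pos.2 hpos).ne')
  rw [logDeriv_apply, hinv.deriv, rpow_sub_one (one_div_pos.2 hpos).ne']
  have hrpow : (1 / f x) ^ p ≠ 0 := (rpow_pos_of_pos (one_div_pos.2 hpos) p).ne'
  field_simp
  ring

end LogDeriv

section Exponential

variable {s v x : ℝ}

lemma hundred_mul_add_one_le_exp (hs : 15 ≤ s) : 100 * (s + 1) ≤ exp s := by
  have hfour : s ^ 4 / 24 ≤ exp s := by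
    simpa [Nat.factorial] using pow_div_factorial_le_exp s (by linarith) 4
  have hsq : 15 * s ≤ s ^ 2 := by nlinarith
  nlinarith

lemma sinh_le_add_sq (hv : 0 ≤ v) (hv1 : v ≤ 1) : sinh v ≤ v + v ^ 2 / 2 := by
  have hexp := (abs_le.1 (abs_exp_sub_one_sub_id_le (abs_le.2 ⟨by linarith, hv1⟩))).2
  have hexp_neg := add_one_le_exp (-v)
  rw [sinh_eq]
  linarith

lemma exp_mul_one_sub_le_exp_sub (s v : ℝ) : exp s * (1 - v) ≤ exp (s - v) := by
  rw [sub_eq_add_neg s, exp_add]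
  gcongr
  linarith [add_one_le_exp (-v)]

lemma mul_exp_sub_one_le (hx : 0 ≤ x) (hxs : x ≤ s) :
    s * (exp x - 1) ≤ x * (exp s - 1) := by
  rcases hx.eq_or_lt with rfl | hx
  · simp
  have hs : 0 < s := hx.trans_le hxs
  have hsecant := convexOn_exp.secant_mono (mem_univ 0) (mem_univ x) (mem_univ s) hx.ne' hs.ne' hxs
  rw [exp_zero, sub_zero, sub_zero, div_le_div_iff₀ hx hs] at hsecant
  linarith

lemma two_mul_exp_le_exp_add_add_exp_sub (x v : ℝ) : 2 * exp x ≤ exp (x + v) + exp (x - v) := by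
  have hcosh : exp (x + v) + exp (x - v) = 2 * exp x * cosh v := by
    rw [cosh_eq, exp_add, sub_eq_add_neg, exp_add]
    ring
  rw [hcosh]
  exact le_mul_of_one_le_right (by positivity) (one_le_cosh v)

lemma exp_add_sub_exp_sub (x v : ℝ) : exp (x + v) - exp (x - v) = 2 * exp x * sinh v := by
  rw [sinh_eq, exp_add, sub_eq_add_neg x, exp_add]
  ring

end Exponential

section q

variable {s x : ℝ}

lemma q_nonneg (x : ℝ) : 0 ≤ q x := by
  unfold q
  linarith [add_one_le_exp x]

lemma q_pos (hx : x ≠ 0) : 0 < q x := by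
  unfold q
  linarith [add_one_lt_exp hx]

lemma hasDerivAt_q (x : ℝ) : HasDerivAt q (exp x - 1) x :=
  ((hasDerivAt_exp x).sub (hasDerivAt_id x)).sub_const 1

lemma q_div_q_le (hs : 0 < s) (hx : 0 ≤ x) (hxs : x ≤ s) :
    q x / q s ≤ (exp x - 1) / (exp s - 1) := by
  rw [div_le_div_iff₀ (q_pos hs.ne') (by linarith [add_one_lt_exp hs.ne'])]
  unfold q
  linarith [mul_exp_sub_one_le hx hxs]

lemma self_le_Qf (hs : 0 < s) : s ≤ Qf s := by
  have hq : 0 < exp s - s - 1 := q_pos hs.ne'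
  rw [Qf, le_div_iff₀ hq]
  nlinarith

end q

section A

variable {p s x : ℝ}

/-- The affine function `A` of the statement, with the exponent `p` in place of `Q = Q(s)`. -/
noncomputable def A (p x : ℝ) : ℝ := 1 + 7 / (10 * p) * x - 7 / (10 * p)

lemma hasDerivAt_A (p x : ℝ) : HasDerivAt (A p) (7 / (10 * p)) x := by
  have hmul := (hasDerivAt_id x).const_mul (7 / (10 * p))
  rw [mul_one] at hmul
  exact (hmul.const_add 1).sub_const _

@[fun_prop]
lemma differentiable_A (p : ℝ) : Differentiable ℝ (A p) :=
  fun x => (hasDerivAt_A p x).differentiableAt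

lemma A_le_one (hp : 0 ≤ p) (hx : x ≤ 1) : A p x ≤ 1 := by
  have hslope : 0 ≤ 7 / (10 * p) := by positivity
  unfold A
  nlinarith

lemma A_nonneg (hp : 1 ≤ p) (hx : 0 ≤ x) : 0 ≤ A p x := by
  have hslope : 0 ≤ 7 / (10 * p) := by positivity
  have hslope_le : 7 / (10 * p) ≤ 1 := by
    rw [div_le_one (by linarith)]
    linarith
  unfold A
  nlinarith

/-- The slope of `x ↦ s * A (Qf s) x`, the argument at which `OPT1` evaluates `q`. -/
noncomputable def rate (s : ℝ) : ℝ := s * (7 / (10 * Qf s))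

lemma mul_A_eq (s x : ℝ) : s * A (Qf s) x = s - rate s * (1 - x) := by
  unfold A rate
  ring

lemma rate_pos (hs : 0 < s) : 0 < rate s := by
  have hQ : 0 < Qf s := hs.trans_le (self_le_Qf hs)
  unfold rate
  positivity

lemma rate_le (hs : 0 < s) : rate s ≤ 7 / 10 := by
  have hQ := self_le_Qf hs
  rw [rate, mul_div_assoc', div_le_div_iff₀ (by linarith) (by norm_num)]
  linarith

lemma rate_mul_exp_sub_one (hs : 0 < s) : rate s * (exp s - 1) = 7 / 10 * q s := by
  have hq : exp s - s - 1 ≠ 0 := (q_pos hs.ne').ne'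
  have hE : exp s - 1 ≠ 0 := by linarith [add_one_lt_exp hs.ne']
  unfold rate Qf q
  field_simp

end A

section OPT1

variable {s x₀ x₁ x₂ y z : ℝ}

/-- The factor `OPT1`. -/
noncomputable def OPT1 (s x₀ x₁ x₂ : ℝ) : ℝ := (q (s * x₀) + q (s * x₁) + q (s * x₂)) / q s

lemma OPT1_pos (hs : s ≠ 0) (hx₀ : x₀ ≠ 0) : 0 < OPT1 s x₀ x₁ x₂ :=
  div_pos (add_pos_of_pos_of_nonneg (add_pos_of_pos_of_nonneg (q_pos (mul_ne_zero hs hx₀))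
    (q_nonneg _)) (q_nonneg _)) (q_pos hs)

lemma hasDerivAt_OPT1 {x₁ x₂ : ℝ → ℝ} {x₁' x₂' u : ℝ} (hx₁ : HasDerivAt x₁ x₁' u)
    (hx₂ : HasDerivAt x₂ x₂' u) :
    HasDerivAt (fun u => OPT1 s x₀ (x₁ u) (x₂ u))
      (((exp (s * x₁ u) - 1) * (s * x₁') + (exp (s * x₂ u) - 1) * (s * x₂')) / q s) u :=
  ((((hasDerivAt_q _).comp u (hx₁.const_mul s)).const_add _).add
    ((hasDerivAt_q _).comp u (hx₂.const_mul s))).div_const _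

lemma hasDerivAt_OPT1_diag (s y : ℝ) :
    HasDerivAt (fun y => OPT1 s 1 (A (Qf s) y) (A (Qf s) y))
      (2 * rate s * (exp (s * A (Qf s) y) - 1) / q s) y := by
  refine (hasDerivAt_OPT1 (hasDerivAt_A _ y) (hasDerivAt_A _ y)).congr_deriv ?_
  unfold rate
  ring

lemma hasDerivAt_OPT1_split (s y z : ℝ) :
    HasDerivAt (fun z => OPT1 s 1 (A (Qf s) (y + z)) (A (Qf s) (y - z)))
      (rate s * (exp (s * A (Qf s) (y + z)) - exp (s * A (Qf s) (y - z))) / q s) z := by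
  have hadd := (hasDerivAt_A (Qf s) (y + z)).comp z ((hasDerivAt_id z).const_add y)
  have hsub := (hasDerivAt_A (Qf s) (y - z)).comp z ((hasDerivAt_id z).const_sub y)
  refine (hasDerivAt_OPT1 hadd hsub).congr_deriv ?_
  simp only [Function.comp_apply, rate]
  ring

lemma le_exp_mul_A_sub_one_div (hs : 1 ≤ s) (hy : y ≤ 1) :
    1 - 7 / 10 * (1 - y) ≤ (exp (s * A (Qf s) y) - 1) / (exp s - 1) := by
  have hs0 : 0 < s := by linarith
  have hE : 0 < exp s - 1 := by linarith [add_one_lt_exp hs0.ne']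
  have hrate : rate s * exp s ≤ 7 / 10 * (exp s - 1) := by
    have hrate_mul := rate_mul_exp_sub_one hs0
    unfold q at hrate_mul
    linarith [rate_le hs0]
  have hexp := exp_mul_one_sub_le_exp_sub s (rate s * (1 - y))
  rw [le_div_iff₀ hE, mul_A_eq]
  linarith [mul_le_mul_of_nonneg_right hrate (sub_nonneg.2 hy)]

lemma OPT1_diag_le (hs : 1 ≤ s) (hy0 : 0 ≤ y) (hy1 : y ≤ 1) :
    OPT1 s 1 (A (Qf s) y) (A (Qf s) y) ≤
      1 + 2 * ((exp (s * A (Qf s) y) - 1) / (exp s - 1)) := by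
  have hs0 : 0 < s := by linarith
  have hQ : 1 ≤ Qf s := hs.trans (self_le_Qf hs0)
  have hratio : q (s * A (Qf s) y) / q s ≤ (exp (s * A (Qf s) y) - 1) / (exp s - 1) :=
    q_div_q_le hs0 (mul_nonneg hs0.le (A_nonneg hQ hy0))
      (mul_le_of_le_one_right hs0.le (A_le_one (by linarith) hy1))
  have hOPT1 : OPT1 s 1 (A (Qf s) y) (A (Qf s) y) = 1 + 2 * (q (s * A (Qf s) y) / q s) := by
    have hq : q s ≠ 0 := (q_pos hs0.ne').ne'
    rw [OPT1, mul_one]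
    field_simp
    ring
  linarith

lemma le_logDeriv_OPT1_diag (hs : 1 ≤ s) (hy0 : 2 / 5 ≤ y) (hy1 : y ≤ 1) :
    7 / 5 * (1 / 3 - 11 / 100 * (1 - y)) ≤
      logDeriv (fun y => OPT1 s 1 (A (Qf s) y) (A (Qf s) y)) y := by
  have hs0 : 0 < s := by linarith
  refine le_logDeriv_of_hasDerivAt (hasDerivAt_OPT1_diag s y) (OPT1_pos hs0.ne' one_ne_zero) ?_
  have hderiv : 2 * rate s * (exp (s * A (Qf s) y) - 1) / q s =
      7 / 5 * ((exp (s * A (Qf s) y) - 1) / (exp s - 1)) := by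
    have hE : exp s - 1 ≠ 0 := by linarith [add_one_lt_exp hs0.ne']
    rw [mul_div_assoc', div_eq_div_iff (q_pos hs0.ne').ne' hE]
    linear_combination 2 * (exp (s * A (Qf s) y) - 1) * rate_mul_exp_sub_one hs0
  have hlower := le_exp_mul_A_sub_one_div hs hy1
  have hupper := OPT1_diag_le hs (by linarith) hy1
  rw [hderiv]
  generalize (exp (s * A (Qf s) y) - 1) / (exp s - 1) = φ at hlower hupper
  calc 7 / 5 * (1 / 3 - 11 / 100 * (1 - y)) * OPT1 s 1 (A (Qf s) y) (A (Qf s) y)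
      ≤ 7 / 5 * (1 / 3 - 11 / 100 * (1 - y)) * (1 + 2 * φ) := by
        gcongr
        linarith
    _ ≤ 7 / 5 * φ := by nlinarith

lemma two_le_OPT1_split (hs : 15 ≤ s) (hy : 2 / 5 ≤ y) :
    2 ≤ OPT1 s 1 (A (Qf s) (y + z)) (A (Qf s) (y - z)) := by
  have hs0 : 0 < s := by linarith
  have hrate0 := rate_pos hs0
  have hrate := rate_le hs0
  have hdrop : rate s * (1 - y) ≤ 21 / 50 := by nlinarith
  have hexp := exp_mul_one_sub_le_exp_sub s (rate s * (1 - y))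
  have hpair := two_mul_exp_le_exp_add_add_exp_sub (s - rate s * (1 - y)) (rate s * z)
  have hlarge := hundred_mul_add_one_le_exp hs
  rw [OPT1, le_div_iff₀ (q_pos hs0.ne'), mul_one, mul_A_eq, mul_A_eq,
    show s - rate s * (1 - (y + z)) = s - rate s * (1 - y) + rate s * z by ring,
    show s - rate s * (1 - (y - z)) = s - rate s * (1 - y) - rate s * z by ring]
  unfold q
  nlinarith

lemma logDeriv_OPT1_split_le (hs : 15 ≤ s) (hy0 : 2 / 5 ≤ y) (hy1 : y ≤ 1) (hz0 : 0 ≤ z)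
    (hz : z ≤ 1 / 2) :
    logDeriv (fun z => OPT1 s 1 (A (Qf s) (y + z)) (A (Qf s) (y - z))) z ≤ 4 / 5 * z := by
  have hs0 : 0 < s := by linarith
  have hrate0 := rate_pos hs0
  have hrate := rate_le hs0
  refine logDeriv_le_of_hasDerivAt (hasDerivAt_OPT1_split s y z)
    (OPT1_pos hs0.ne' one_ne_zero) ?_
  have hsinh : sinh (rate s * z) ≤ 33 / 40 * z := by
    have hle : rate s * z ≤ 7 / 10 * z := by gcongr
    have hsinh_le := sinh_le_add_sq (v := rate s * z) (by positivity) (by linarith)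
    nlinarith [mul_nonneg hrate0.le hz0]
  have hexp_le : exp (s - rate s * (1 - y)) ≤ exp s :=
    exp_le_exp.2 (sub_le_self _ (mul_nonneg hrate0.le (sub_nonneg.2 hy1)))
  have hq : 99 / 100 * exp s ≤ q s := by
    unfold q
    linarith [hundred_mul_add_one_le_exp hs]
  have hq0 : 0 < q s := q_pos hs0.ne'
  calc rate s * (exp (s * A (Qf s) (y + z)) - exp (s * A (Qf s) (y - z))) / q s
      = rate s * (2 * exp (s - rate s * (1 - y)) * sinh (rate s * z)) / q s := by
        rw [← exp_add_sub_exp_sub, mul_A_eq, mul_A_eq]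
        ring_nf
    _ ≤ 7 / 10 * (2 * exp s * (33 / 40 * z)) / q s := by
        have hsinh0 : 0 ≤ sinh (rate s * z) := sinh_nonneg_iff.2 (by positivity)
        gcongr
    _ ≤ 4 / 5 * z * 2 := by
        rw [div_le_iff₀ hq0]
        nlinarith [mul_le_mul_of_nonneg_right hq hz0, mul_nonneg (exp_pos s).le hz0]
    _ ≤ 4 / 5 * z * OPT1 s 1 (A (Qf s) (y + z)) (A (Qf s) (y - z)) := by
        gcongr
        exact two_le_OPT1_split hs hy0

end OPT1

section OPT2

variable {p x₀ x₁ x₂ y₀ y₁ y₂ y z : ℝ}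

/-- The factor `OPT2`, with the exponent `p` in place of `Q = Q(s)`. -/
noncomputable def OPT2 (p x₀ x₁ x₂ y₀ y₁ y₂ : ℝ) : ℝ := (1 / (x₀ * y₀ + x₁ * y₁ + x₂ * y₂)) ^ p

lemma OPT2_pos (h : 0 < x₀ * y₀ + x₁ * y₁ + x₂ * y₂) : 0 < OPT2 p x₀ x₁ x₂ y₀ y₁ y₂ :=
  rpow_pos_of_pos (one_div_pos.2 h) p

lemma differentiableAt_OPT2 {x₁ x₂ y₁ y₂ : ℝ → ℝ} {u : ℝ}
    (hx₁ : DifferentiableAt ℝ x₁ u) (hx₂ : DifferentiableAt ℝ x₂ u)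
    (hy₁ : DifferentiableAt ℝ y₁ u) (hy₂ : DifferentiableAt ℝ y₂ u)
    (hpos : 0 < x₀ * y₀ + x₁ u * y₁ u + x₂ u * y₂ u) :
    DifferentiableAt ℝ (fun u => OPT2 p x₀ (x₁ u) (x₂ u) y₀ (y₁ u) (y₂ u)) u :=
  ((differentiableAt_const 1).fun_div
    (((hx₁.fun_mul hy₁).const_add _).fun_add (hx₂.fun_mul hy₂)) hpos.ne').rpow_const
      (Or.inl (one_div_pos.2 hpos).ne')

lemma pairing_pos (hp : 1 ≤ p) (hy : 0 ≤ y) (hz : 0 ≤ z) :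
    0 < 1 * 1 + A p y * y + A p z * z := by
  have hAy := A_nonneg hp hy
  have hAz := A_nonneg hp hz
  positivity

lemma pairing_le (hp : 0 ≤ p) (hy0 : 0 ≤ y) (hy1 : y ≤ 1) (hz0 : 0 ≤ z) (hz1 : z ≤ 1) :
    1 * 1 + A p y * y + A p z * z ≤ 1 + y + z := by
  linarith [mul_le_of_le_one_left hy0 (A_le_one hp hy1),
    mul_le_of_le_one_left hz0 (A_le_one hp hz1)]

lemma hasDerivAt_pairing_diag (p y : ℝ) :
    HasDerivAt (fun y => 1 * 1 + A p y * y + A p y * y) (2 * (7 / (10 * p) * y + A p y)) y := by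
  have hterm := (hasDerivAt_A p y).mul (hasDerivAt_id y)
  refine ((hterm.const_add (1 * 1)).add hterm).congr_deriv ?_
  simp only [id]
  ring

lemma hasDerivAt_pairing_split (p y z : ℝ) :
    HasDerivAt (fun z => 1 * 1 + A p (y + z) * (y + z) + A p (y - z) * (y - z))
      (4 * (7 / (10 * p)) * z) z := by
  have hadd := (hasDerivAt_id z).const_add y
  have hsub := (hasDerivAt_id z).const_sub y
  have hadd_term := ((hasDerivAt_A p (y + z)).comp z hadd).mul hadd
  have hsub_term := ((hasDerivAt_A p (y - z)).comp z hsub).mul hsub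
  refine ((hadd_term.const_add (1 * 1)).add hsub_term).congr_deriv ?_
  simp only [Function.comp_apply, id, A]
  ring

lemma pairing_diag_ge (hp : 15 ≤ p) (hy0 : 0 ≤ y) (hy1 : y ≤ 1) :
    (1 + 2 * y) * (1 - 7 / 225 * (1 - y)) ≤ 1 * 1 + A p y * y + A p y * y := by
  have hslope : 7 / (10 * p) ≤ 7 / 150 := by gcongr; linarith
  have hyy : 0 ≤ y * (1 - y) := mul_nonneg hy0 (sub_nonneg.2 hy1)
  unfold A
  nlinarith [mul_le_mul_of_nonneg_right hslope hyy, sq_nonneg (1 - y)]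

lemma mul_deriv_pairing_diag_div (hp : p ≠ 0) (hy : 1 + 2 * y ≠ 0)
    (hN : 1 * 1 + A p y * y + A p y * y ≠ 0) :
    p * (2 * (7 / (10 * p) * y + A p y) / (1 * 1 + A p y * y + A p y * y)) =
      2 * p / (1 + 2 * y) + 7 / 5 * ((2 * y ^ 2 + 2 * y - 1) /
        ((1 + 2 * y) * (1 * 1 + A p y * y + A p y * y))) := by
  have hpA : 10 * p * A p y = 10 * p - 7 * (1 - y) := by
    unfold A
    field_simp
    ring
  rw [show 1 * 1 + A p y * y + A p y * y = 1 + 2 * y * A p y by ring] at hN ⊢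
  field_simp
  linear_combination 10 * hpA

lemma div_pairing_diag_le (hp : 15 ≤ p) (hy0 : 2 / 5 ≤ y) (hy1 : y ≤ 1) :
    (2 * y ^ 2 + 2 * y - 1) / ((1 + 2 * y) * (1 * 1 + A p y * y + A p y * y)) ≤
      1 / 3 - 18 / 100 * (1 - y) := by
  have hN := pairing_pos (p := p) (y := y) (z := y) (by linarith) (by linarith) (by linarith)
  have hd : 0 ≤ (1 - y) ^ 2 := sq_nonneg _
  rw [div_le_iff₀ (mul_pos (by linarith) hN)]
  calc 2 * y ^ 2 + 2 * y - 1
      ≤ (1 / 3 - 1 / 5 * (1 - y)) * (1 + 2 * y) ^ 2 := by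
        nlinarith [mul_nonneg hd (sub_nonneg.2 hy0)]
    _ ≤ (1 / 3 - 18 / 100 * (1 - y)) * (1 - 7 / 225 * (1 - y)) * (1 + 2 * y) ^ 2 := by
        gcongr
        nlinarith
    _ = (1 / 3 - 18 / 100 * (1 - y)) *
          ((1 + 2 * y) * ((1 + 2 * y) * (1 - 7 / 225 * (1 - y)))) := by ring
    _ ≤ (1 / 3 - 18 / 100 * (1 - y)) *
          ((1 + 2 * y) * (1 * 1 + A p y * y + A p y * y)) := by
        gcongr
        · linarith
        · exact pairing_diag_ge hp (by linarith) hy1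

lemma le_logDeriv_OPT2_diag (hp : 15 ≤ p) (hy0 : 2 / 5 ≤ y) (hy1 : y ≤ 1) :
    -(2 * p / (1 + 2 * y)) - 7 / 5 * (1 / 3 - 18 / 100 * (1 - y)) ≤
      logDeriv (fun y => OPT2 p 1 (A p y) (A p y) 1 y y) y := by
  have hN := pairing_pos (p := p) (y := y) (z := y) (by linarith) (by linarith) (by linarith)
  rw [show logDeriv (fun y => OPT2 p 1 (A p y) (A p y) 1 y y) y = _ from
      logDeriv_one_div_rpow (hasDerivAt_pairing_diag p y) hN,
    mul_deriv_pairing_diag_div (by linarith) (by linarith) hN.ne']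
  linarith [div_pairing_diag_le hp hy0 hy1]

lemma logDeriv_OPT2_split_le (hp : 1 ≤ p) (hz0 : 0 ≤ z) (hzy : z ≤ y) (hzy1 : z ≤ 1 - y) :
    logDeriv (fun z => OPT2 p 1 (A p (y + z)) (A p (y - z)) 1 (y + z) (y - z)) z ≤
      -(14 / 15 * z) := by
  have hN := pairing_pos (y := y + z) (z := y - z) hp (by linarith) (by linarith)
  have hN3 : 1 * 1 + A p (y + z) * (y + z) + A p (y - z) * (y - z) ≤ 3 := by
    linarith [pairing_le (p := p) (y := y + z) (z := y - z) (by linarith) (by linarith)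
      (by linarith) (by linarith) (by linarith)]
  rw [show logDeriv (fun z => OPT2 p 1 (A p (y + z)) (A p (y - z)) 1 (y + z) (y - z)) z = _ from
    logDeriv_one_div_rpow (hasDerivAt_pairing_split p y z) hN, neg_le_neg_iff]
  generalize 1 * 1 + A p (y + z) * (y + z) + A p (y - z) * (y - z) = N at hN hN3
  calc 14 / 15 * z = 14 / 5 * z / 3 := by ring
    _ ≤ 14 / 5 * z / N := by gcongr
    _ = p * (4 * (7 / (10 * p)) * z / N) := by
      have hp0 : p ≠ 0 := by linarith
      field_simp
      ring

end OPT2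

section OPT3

variable {p y₀ y₁ y₂ y z S W : ℝ}

/-- The factor `OPT3`, with the exponent `p` in place of `Q = Q(s)`. -/
noncomputable def OPT3 (p y₀ y₁ y₂ : ℝ) : ℝ :=
  (y₀ + y₁ + y₂) ^ p +
    2 * (y₀ ^ 2 + y₁ ^ 2 + y₂ ^ 2 - y₀ * y₁ - y₀ * y₂ - y₁ * y₂) ^ (p / 2)

lemma OPT3_pos (h : 0 < y₀ + y₁ + y₂) : 0 < OPT3 p y₀ y₁ y₂ := by
  have hquad : 0 ≤ y₀ ^ 2 + y₁ ^ 2 + y₂ ^ 2 - y₀ * y₁ - y₀ * y₂ - y₁ * y₂ := by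
    nlinarith [sq_nonneg (y₀ - y₁), sq_nonneg (y₀ - y₂), sq_nonneg (y₁ - y₂)]
  unfold OPT3
  positivity

lemma differentiableAt_OPT3 {y₁ y₂ : ℝ → ℝ} {u : ℝ} (hp : 2 ≤ p)
    (hy₁ : DifferentiableAt ℝ y₁ u) (hy₂ : DifferentiableAt ℝ y₂ u) :
    DifferentiableAt ℝ (fun u => OPT3 p y₀ (y₁ u) (y₂ u)) u := by
  have hsum : DifferentiableAt ℝ (fun u => y₀ + y₁ u + y₂ u) u := by fun_prop
  have hquad : DifferentiableAt ℝ (fun u => y₀ ^ 2 + y₁ u ^ 2 + y₂ u ^ 2 - y₀ * y₁ u -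
      y₀ * y₂ u - y₁ u * y₂ u) u := by fun_prop
  exact (hsum.rpow_const (Or.inr (by linarith))).fun_add
    ((hquad.rpow_const (Or.inr (by linarith))).const_mul 2)

lemma OPT3_split (p y z : ℝ) :
    OPT3 p 1 (y + z) (y - z) = (1 + 2 * y) ^ p + 2 * ((1 - y) ^ 2 + 3 * z ^ 2) ^ (p / 2) := by
  unfold OPT3
  ring_nf

lemma OPT3_diag (p y : ℝ) : OPT3 p 1 y y = (1 + 2 * y) ^ p + 2 * ((1 - y) ^ 2) ^ (p / 2) := by
  unfold OPT3
  ring_nf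

lemma hasDerivAt_OPT3_diag (hp : 2 ≤ p) (y : ℝ) :
    HasDerivAt (fun y => OPT3 p 1 y y)
      (2 * p * (1 + 2 * y) ^ (p - 1) - 2 * p * (1 - y) * ((1 - y) ^ 2) ^ (p / 2 - 1)) y := by
  simp only [OPT3_diag]
  have hsum : HasDerivAt (fun y : ℝ => 1 + 2 * y) 2 y := by
    simpa using ((hasDerivAt_id y).const_mul 2).const_add 1
  have hquad : HasDerivAt (fun y : ℝ => (1 - y) ^ 2) (-(2 * (1 - y))) y := by
    simpa using ((hasDerivAt_id y).const_sub 1).fun_pow 2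
  refine ((hsum.rpow_const (Or.inr (by linarith))).add
    ((hquad.rpow_const (Or.inr (by linarith))).const_mul 2)).congr_deriv ?_
  ring

lemma hasDerivAt_OPT3_split (hp : 2 ≤ p) (y z : ℝ) :
    HasDerivAt (fun z => OPT3 p 1 (y + z) (y - z))
      (6 * z * (p * ((1 - y) ^ 2 + 3 * z ^ 2) ^ (p / 2 - 1))) z := by
  simp only [OPT3_split]
  have hquad : HasDerivAt (fun z : ℝ => (1 - y) ^ 2 + 3 * z ^ 2) (6 * z) z := by
    refine (((hasDerivAt_pow 2 z).const_mul 3).const_add _).congr_deriv ?_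
    norm_num
    ring
  refine (((hquad.rpow_const (Or.inr (by linarith))).const_mul 2).const_add _).congr_deriv ?_
  ring

lemma mul_rpow_sub_two_le (hp : 15 ≤ p) : p * (51 / 100 : ℝ) ^ (p - 2) ≤ 1 / 100 := by
  have hbernoulli : 100 * p ≤ (100 / 51 : ℝ) ^ (p - 2) := by
    calc 100 * p ≤ 1 + (p - 2) / 13 * 2600 := by linarith
      _ ≤ (1 + 2600) ^ ((p - 2) / 13) :=
        one_add_mul_self_le_rpow_one_add (by norm_num) (by linarith)
      _ ≤ ((100 / 51 : ℝ) ^ (13 : ℝ)) ^ ((p - 2) / 13) := by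
        gcongr
        · linarith
        · norm_num
      _ = (100 / 51 : ℝ) ^ (p - 2) := by
        rw [← rpow_mul (by norm_num)]
        ring_nf
  rw [show (51 / 100 : ℝ) = (100 / 51)⁻¹ by norm_num, inv_rpow (by norm_num), ← div_eq_mul_inv,
    div_le_iff₀ (by positivity)]
  linarith

lemma mul_rpow_half_sub_one_le (hp : 15 ≤ p) (hW0 : 0 ≤ W) (hS : 0 ≤ S)
    (hW : W ≤ (51 / 100 * S) ^ 2) : p * W ^ (p / 2 - 1) ≤ 1 / 100 * S ^ (p - 2) := by
  calc p * W ^ (p / 2 - 1)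
      ≤ p * ((51 / 100 * S) ^ 2) ^ (p / 2 - 1) := by
        gcongr
        linarith
    _ = p * (51 / 100) ^ (p - 2) * S ^ (p - 2) := by
        rw [← rpow_two, ← rpow_mul (by positivity), mul_assoc, ← mul_rpow (by norm_num) hS]
        ring_nf
    _ ≤ 1 / 100 * S ^ (p - 2) := by
        gcongr
        exact mul_rpow_sub_two_le hp

lemma rpow_eq_rpow_sub_two_mul_sq (hS : 0 < S) (p : ℝ) : S ^ p = S ^ (p - 2) * S ^ 2 := by
  rw [← rpow_two, ← rpow_add hS, sub_add_cancel]

lemma mul_rpow_half_sub_one_div_le (hp : 15 ≤ p) (hy0 : 2 / 5 ≤ y) (hy1 : y ≤ 1) :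
    6 * (1 - y) * (p * ((1 - y) ^ 2) ^ (p / 2 - 1)) / (1 + 2 * y) ≤
      (1 - y) / 50 * (1 + 2 * y) ^ p := by
  have hd : 0 ≤ 1 - y := by linarith
  have hS : 0 < 1 + 2 * y := by linarith
  have hW : (1 - y) ^ 2 ≤ (51 / 100 * (1 + 2 * y)) ^ 2 := by
    gcongr
    linarith
  rw [div_le_iff₀ hS]
  calc 6 * (1 - y) * (p * ((1 - y) ^ 2) ^ (p / 2 - 1))
      ≤ 6 * (1 - y) * (1 / 100 * (1 + 2 * y) ^ (p - 2)) := by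
        gcongr 6 * (1 - y) * ?_
        exact mul_rpow_half_sub_one_le hp (sq_nonneg _) hS.le hW
    _ = (1 - y) / 50 * (1 + 2 * y) ^ (p - 2) * 3 := by ring
    _ ≤ (1 - y) / 50 * (1 + 2 * y) ^ (p - 2) * (1 + 2 * y) ^ 3 := by
        gcongr
        nlinarith [sq_nonneg (1 + 2 * y)]
    _ = (1 - y) / 50 * (1 + 2 * y) ^ p * (1 + 2 * y) := by
        rw [rpow_eq_rpow_sub_two_mul_sq hS p]
        ring

lemma le_logDeriv_OPT3_diag (hp : 15 ≤ p) (hy0 : 2 / 5 ≤ y) (hy1 : y ≤ 1) :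
    2 * p / (1 + 2 * y) - (1 - y) / 50 ≤ logDeriv (fun y => OPT3 p 1 y y) y := by
  refine le_logDeriv_of_hasDerivAt (hasDerivAt_OPT3_diag (by linarith) y)
    (OPT3_pos (by linarith)) ?_
  have hd : 0 ≤ 1 - y := by linarith
  have hS : 0 < 1 + 2 * y := by linarith
  have herror := mul_rpow_half_sub_one_div_le hp hy0 hy1
  have hWpow : ((1 - y) ^ 2) ^ (p / 2) = ((1 - y) ^ 2) ^ (p / 2 - 1) * (1 - y) ^ 2 := by
    rw [← rpow_add_one' (sq_nonneg _) (by linarith), sub_add_cancel]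
  have hSpow : (1 + 2 * y) ^ p = (1 + 2 * y) ^ (p - 1) * (1 + 2 * y) := by
    rw [← rpow_add_one hS.ne', sub_add_cancel]
  have hV : 0 ≤ ((1 - y) ^ 2) ^ (p / 2 - 1) := by positivity
  rw [OPT3_diag, hWpow]
  generalize ((1 - y) ^ 2) ^ (p / 2 - 1) = V at herror hV
  -- The two terms with `V` combine because `(1 + 2 * y) + 2 * (1 - y) = 3`.
  have hexpand : (2 * p / (1 + 2 * y) - (1 - y) / 50) *
        ((1 + 2 * y) ^ p + 2 * (V * (1 - y) ^ 2)) =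
      2 * p * (1 + 2 * y) ^ (p - 1) - 2 * p * (1 - y) * V +
        (6 * (1 - y) * (p * V) / (1 + 2 * y) - (1 - y) / 50 * (1 + 2 * y) ^ p) -
        (1 - y) ^ 3 * V / 25 := by
    rw [hSpow]
    field_simp
    ring
  have hrest : 0 ≤ (1 - y) ^ 3 * V / 25 := by positivity
  linarith

lemma logDeriv_OPT3_split_le (hp : 15 ≤ p) (hy0 : 2 / 5 ≤ y) (hz0 : 0 ≤ z) (hzy : z ≤ y)
    (hzy1 : z ≤ 1 - y) : logDeriv (fun z => OPT3 p 1 (y + z) (y - z)) z ≤ z / 25 := by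
  refine logDeriv_le_of_hasDerivAt (hasDerivAt_OPT3_split (by linarith) y z)
    (OPT3_pos (by linarith)) ?_
  have hS : 0 < 1 + 2 * y := by linarith
  have hW : (1 - y) ^ 2 + 3 * z ^ 2 ≤ (51 / 100 * (1 + 2 * y)) ^ 2 := by
    rcases le_total y (1 / 2) with hy | hy <;> nlinarith
  calc 6 * z * (p * ((1 - y) ^ 2 + 3 * z ^ 2) ^ (p / 2 - 1))
      ≤ 6 * z * (1 / 100 * (1 + 2 * y) ^ (p - 2)) := by
        gcongr 6 * z * ?_
        exact mul_rpow_half_sub_one_le hp (by positivity) hS.le hW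
    _ ≤ z / 25 * (1 + 2 * y) ^ p := by
        rw [rpow_eq_rpow_sub_two_mul_sq hS p]
        have hzS : 0 ≤ z * (1 + 2 * y) ^ (p - 2) := by positivity
        nlinarith
    _ ≤ z / 25 * OPT3 p 1 (y + z) (y - z) := by
        rw [OPT3_split]
        gcongr
        exact le_add_of_nonneg_right (by positivity)

end OPT3

section OPT

variable {s y z : ℝ}

lemma OPT_eq_mul (x₀ x₁ x₂ y₀ y₁ y₂ s : ℝ) :
    OPT x₀ x₁ x₂ y₀ y₁ y₂ s =
      OPT1 s x₀ x₁ x₂ * OPT2 (Qf s) x₀ x₁ x₂ y₀ y₁ y₂ * OPT3 (Qf s) y₀ y₁ y₂ := rfl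

lemma OPT_one_eq_three (hs : 0 < s) : OPT 1 1 1 1 1 1 s = 3 := by
  have hq : q s ≠ 0 := (q_pos hs.ne').ne'
  have hQ : Qf s / 2 ≠ 0 := by linarith [self_le_Qf hs]
  have h1 : OPT1 s 1 1 1 = 3 := by
    rw [OPT1, mul_one]
    field_simp
    norm_num
  have h3 : OPT3 (Qf s) 1 1 1 = 3 ^ Qf s := by
    rw [OPT3_diag, sub_self, zero_pow two_ne_zero, zero_rpow hQ]
    norm_num
  rw [OPT_eq_mul, h1, h3, OPT2, one_div, inv_rpow (by norm_num)]
  norm_num [mul_assoc, (rpow_pos_of_pos (three_pos (α := ℝ)) (Qf s)).ne']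

section Path

variable {x₀ y₀ u : ℝ} {x₁ x₂ y₁ y₂ : ℝ → ℝ}

lemma OPT_pos {x₁ x₂ y₁ y₂ : ℝ} (hs : s ≠ 0) (hx₀ : x₀ ≠ 0)
    (hpair : 0 < x₀ * y₀ + x₁ * y₁ + x₂ * y₂) (hsum : 0 < y₀ + y₁ + y₂) :
    0 < OPT x₀ x₁ x₂ y₀ y₁ y₂ s :=
  mul_pos (mul_pos (OPT1_pos hs hx₀) (OPT2_pos hpair)) (OPT3_pos hsum)

lemma differentiableAt_OPT (hs : 2 ≤ s)
    (hx₁ : DifferentiableAt ℝ x₁ u) (hx₂ : DifferentiableAt ℝ x₂ u)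
    (hy₁ : DifferentiableAt ℝ y₁ u) (hy₂ : DifferentiableAt ℝ y₂ u)
    (hpair : 0 < x₀ * y₀ + x₁ u * y₁ u + x₂ u * y₂ u) :
    DifferentiableAt ℝ (fun u => OPT x₀ (x₁ u) (x₂ u) y₀ (y₁ u) (y₂ u) s) u :=
  have hQ : 2 ≤ Qf s := hs.trans (self_le_Qf (by linarith))
  ((hasDerivAt_OPT1 hx₁.hasDerivAt hx₂.hasDerivAt).differentiableAt.fun_mul
    (differentiableAt_OPT2 hx₁ hx₂ hy₁ hy₂ hpair)).fun_mul (differentiableAt_OPT3 hQ hy₁ hy₂)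

lemma logDeriv_OPT (hs : 2 ≤ s) (hx₀ : x₀ ≠ 0)
    (hx₁ : DifferentiableAt ℝ x₁ u) (hx₂ : DifferentiableAt ℝ x₂ u)
    (hy₁ : DifferentiableAt ℝ y₁ u) (hy₂ : DifferentiableAt ℝ y₂ u)
    (hpair : 0 < x₀ * y₀ + x₁ u * y₁ u + x₂ u * y₂ u) (hsum : 0 < y₀ + y₁ u + y₂ u) :
    logDeriv (fun u => OPT x₀ (x₁ u) (x₂ u) y₀ (y₁ u) (y₂ u) s) u =
      logDeriv (fun u => OPT1 s x₀ (x₁ u) (x₂ u)) u +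
      logDeriv (fun u => OPT2 (Qf s) x₀ (x₁ u) (x₂ u) y₀ (y₁ u) (y₂ u)) u +
      logDeriv (fun u => OPT3 (Qf s) y₀ (y₁ u) (y₂ u)) u := by
  have hs0 : s ≠ 0 := by linarith
  have hQ : 2 ≤ Qf s := hs.trans (self_le_Qf (by linarith))
  have hdiff1 := (hasDerivAt_OPT1 (s := s) (x₀ := x₀) hx₁.hasDerivAt
    hx₂.hasDerivAt).differentiableAt
  have hdiff2 := differentiableAt_OPT2 (p := Qf s) hx₁ hx₂ hy₁ hy₂ hpair
  have hne1 : OPT1 s x₀ (x₁ u) (x₂ u) ≠ 0 := (OPT1_pos hs0 hx₀).ne'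
  have hne2 := (OPT2_pos (p := Qf s) hpair).ne'
  simp only [OPT_eq_mul]
  rw [logDeriv_mul u (by exact mul_ne_zero hne1 hne2) (by exact (OPT3_pos hsum).ne')
    (hdiff1.fun_mul hdiff2) (differentiableAt_OPT3 hQ hy₁ hy₂),
    logDeriv_mul u hne1 hne2 hdiff1 hdiff2]

end Path

lemma logDeriv_OPT_diag_pos (hs : 15 ≤ s) (hy0 : 2 / 5 ≤ y) (hy1 : y < 1) :
    0 < logDeriv (fun y => OPT 1 (A (Qf s) y) (A (Qf s) y) 1 y y s) y := by
  have hQ : 15 ≤ Qf s := hs.trans (self_le_Qf (by linarith))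
  rw [logDeriv_OPT (x₁ := A (Qf s)) (x₂ := A (Qf s)) (y₁ := fun y => y) (y₂ := fun y => y)
    (by linarith) one_ne_zero (by fun_prop) (by fun_prop) (by fun_prop) (by fun_prop)
    (pairing_pos (by linarith) (by linarith) (by linarith)) (by linarith)]
  linarith [le_logDeriv_OPT1_diag (s := s) (by linarith) hy0 hy1.le,
    le_logDeriv_OPT2_diag hQ hy0 hy1.le, le_logDeriv_OPT3_diag hQ hy0 hy1.le]

lemma logDeriv_OPT_split_nonpos (hs : 15 ≤ s) (hy : 2 / 5 ≤ y) (hz0 : 0 ≤ z) (hzy : z ≤ y)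
    (hzy1 : z ≤ 1 - y) :
    logDeriv (fun z => OPT 1 (A (Qf s) (y + z)) (A (Qf s) (y - z)) 1 (y + z) (y - z) s) z ≤ 0 := by
  have hQ : 15 ≤ Qf s := hs.trans (self_le_Qf (by linarith))
  rw [logDeriv_OPT (x₁ := fun z => A (Qf s) (y + z)) (x₂ := fun z => A (Qf s) (y - z))
    (y₁ := fun z => y + z) (y₂ := fun z => y - z)
    (by linarith) one_ne_zero (by fun_prop) (by fun_prop) (by fun_prop) (by fun_prop)
    (pairing_pos (by linarith) (by linarith) (by linarith)) (by linarith)]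
  linarith [logDeriv_OPT1_split_le hs hy (by linarith) hz0 (by linarith),
    logDeriv_OPT2_split_le (p := Qf s) (by linarith) hz0 hzy hzy1,
    logDeriv_OPT3_split_le hQ hy hz0 hzy hzy1]

lemma strictMonoOn_OPT_diag (hs : 15 ≤ s) :
    StrictMonoOn (fun y => OPT 1 (A (Qf s) y) (A (Qf s) y) 1 y y s) (Icc (2 / 5) 1) := by
  have hQ : 15 ≤ Qf s := hs.trans (self_le_Qf (by linarith))
  have hpair {y : ℝ} (hy : 2 / 5 ≤ y) : 0 < 1 * 1 + A (Qf s) y * y + A (Qf s) y * y :=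
    pairing_pos (by linarith) (by linarith) (by linarith)
  refine strictMonoOn_of_logDeriv_pos (convex_Icc _ _) (fun y hy => ?_) (fun y hy => ?_)
    fun y hy => ?_
  · exact (differentiableAt_OPT (by linarith) (by fun_prop) (by fun_prop) (by fun_prop)
      (by fun_prop) (hpair hy.1)).continuousAt.continuousWithinAt
  · have hy0 : 2 / 5 ≤ y := (interior_subset hy).1
    exact OPT_pos (by linarith) one_ne_zero (hpair hy0) (by linarith)
  · rw [interior_Icc] at hy
    exact logDeriv_OPT_diag_pos hs hy.1.le hy.2

lemma antitoneOn_OPT_split (hs : 15 ≤ s) (hy : 2 / 5 ≤ y) :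
    AntitoneOn
      (fun z => OPT 1 (A (Qf s) (y + z)) (A (Qf s) (y - z)) 1 (y + z) (y - z) s)
      (Icc 0 (min y (1 - y))) := by
  have hQ : 15 ≤ Qf s := hs.trans (self_le_Qf (by linarith))
  have hle {z : ℝ} (hz : z ∈ Icc 0 (min y (1 - y))) : z ≤ y ∧ z ≤ 1 - y := le_min_iff.1 hz.2
  have hpair {z : ℝ} (hz : z ∈ Icc 0 (min y (1 - y))) :
      0 < 1 * 1 + A (Qf s) (y + z) * (y + z) + A (Qf s) (y - z) * (y - z) :=
    pairing_pos (by linarith) (by linarith [hz.1]) (by linarith [hle hz])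
  have hdiff {z : ℝ} (hz : z ∈ Icc 0 (min y (1 - y))) : DifferentiableAt ℝ
      (fun z => OPT 1 (A (Qf s) (y + z)) (A (Qf s) (y - z)) 1 (y + z) (y - z) s) z :=
    differentiableAt_OPT (by linarith) (by fun_prop) (by fun_prop) (by fun_prop) (by fun_prop)
      (hpair hz)
  refine antitoneOn_of_logDeriv_nonpos (convex_Icc _ _)
    (fun z hz => (hdiff hz).continuousAt.continuousWithinAt)
    (fun z hz => (hdiff (interior_subset hz)).differentiableWithinAt) (fun z hz => ?_)
    fun z hz => ?_ <;> replace hz := interior_subset hz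
  · exact OPT_pos (by linarith) one_ne_zero (hpair hz) (by linarith)
  · exact logDeriv_OPT_split_nonpos hs hy hz.1 (hle hz).1 (hle hz).2

end OPT

theorem stmt9 (s : ℝ) (hs : 15 ≤ s) :
    (StrictMonoOn
        (fun y => OPT 1 (1 + 7/(10 * Qf s) * y - 7/(10 * Qf s))
          (1 + 7/(10 * Qf s) * y - 7/(10 * Qf s)) 1 y y s)
        (Set.Icc (4/10 : ℝ) 1) ∧
      OPT 1 (1 + 7/(10 * Qf s) * 1 - 7/(10 * Qf s))
        (1 + 7/(10 * Qf s) * 1 - 7/(10 * Qf s)) 1 1 1 s = 3) ∧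
    ∀ y ∈ Set.Icc (4/10 : ℝ) 1,
      AntitoneOn
        (fun z => OPT 1 (1 + 7/(10 * Qf s) * (y+z) - 7/(10 * Qf s))
          (1 + 7/(10 * Qf s) * (y-z) - 7/(10 * Qf s)) 1 (y+z) (y-z) s)
        (Set.Icc 0 (min y (1-y))) := by
  have hfour : (4 / 10 : ℝ) = 2 / 5 := by norm_num
  have hA : (1 : ℝ) + 7 / (10 * Qf s) * 1 - 7 / (10 * Qf s) = 1 := by ring
  rw [hfour, hA]
  exact ⟨⟨strictMonoOn_OPT_diag hs, OPT_one_eq_three (by linarith)⟩,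
    fun y hy => antitoneOn_OPT_split hs hy.1⟩
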